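/- Assume (K0)–(K4). For a signed Borel measure μ on Ω set 𝒢(μ)(x) := ∫_Ω 𝔾(x,y) dμ(y). Then: (i) there is C > 0 such that ∫_Ω |𝒢(μ)| ≤ C |μ|(Ω) for every finite signed Borel measure μ on Ω; (ii) if μ is a signed Borel measure on Ω with ∫_Ω δ^γ d|μ| < ∞, then u := 𝒢(μ) ∈ L¹_loc(Ω) and u is the unique function in L¹_loc(Ω) satisfying ∫_Ω u ψ = ∫_Ω 𝒢(ψ) dμ for every ψ ∈ L∞_c(Ω); moreover ∫_K |u| ≤ (∫_Ω δ^γ d|μ|) · ‖δ^{−γ} 𝒢(χ_K)‖_{L∞(Ω)} for every compact K ⊂ Ω. -/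

import Mathlib

/-!
The columns `𝔾(·,y)` are bounded in `L¹(Ω)` uniformly in `y`, because `𝔾(x,y)` is at most a multiple
of the locally integrable power `|x - y|^{2s-n}`; Tonelli's theorem then gives (i). For (ii),
`δ(y) ≤ δ(x) + |x - y|` implies `min (δ(x) δ(y) / |x - y|², 1) ≤ 4 δ(x) / δ(y)`, and `δ` is bounded
below on a compact `K ⊆ Ω`, so `𝒢(χ_K) ≤ C δ^γ`. A measure with `∫ δ^γ d|μ| < ∞` is s-finite on `Ω`,
which allows Tonelli's theorem, `∫_K |𝒢(μ)| ≤ ∫ 𝒢(χ_K) d|μ|`, and Fubini's theorem for the weak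
formulation. The compact estimate needs `𝒢(χ_K) ≤ ‖δ^{-γ} 𝒢(χ_K)‖_{L∞} δ^γ` at every point of `Ω`,
since `μ` may charge Lebesgue-null sets: Fatou's lemma and (K4) upgrade the almost everywhere bound.
Uniqueness is the fundamental lemma of the calculus of variations.
-/

open MeasureTheory Metric Set Filter Topology

noncomputable section

abbrev Euc (n : ℕ) : Type := EuclideanSpace ℝ (Fin n)

/-- Distance to the boundary of `Ω`. -/
noncomputable def bdist {n : ℕ} (Ω : Set (Euc n)) (x : Euc n) : ℝ :=
  Metric.infDist x (frontier Ω)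

/-- The two-sided model kernel `H(x,y)` of hypothesis (K2). -/
noncomputable def Hker {n : ℕ} (Ω : Set (Euc n)) (s γ : ℝ) (x y : Euc n) : ℝ :=
  dist x y ^ (2 * s - (n : ℝ)) *
    (min (bdist Ω x * bdist Ω y / dist x y ^ (2 : ℝ)) 1) ^ γ

/-- The Green operator `𝒢(f)(x) = ∫_Ω 𝔾(x,y) f(y) dy` of hypothesis (K0). -/
noncomputable def Gop {n : ℕ} (Ω : Set (Euc n)) (G : Euc n → Euc n → ℝ)
    (f : Euc n → ℝ) (x : Euc n) : ℝ :=
  ∫ y in Ω, G x y * f y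

open scoped ENNReal NNReal ContDiff

section RieszPotential

variable {E : Type*} [NormedAddCommGroup E] [NormedSpace ℝ E] [FiniteDimensional ℝ E]
  [Nontrivial E] [MeasurableSpace E] [BorelSpace E] (μ : Measure E) [μ.IsAddHaarMeasure]

lemma integrableOn_ball_norm_rpow {p : ℝ} (hp : -(Module.finrank ℝ E : ℝ) < p) (R : ℝ) :
    IntegrableOn (fun z : E => ‖z‖ ^ p) (ball 0 R) μ := by
  rcases le_or_gt R 0 with hR | hR
  · simp [ball_eq_empty.2 hR]
  refine (integrableOn_fun_norm_addHaar μ (f := fun t : ℝ => t ^ p)).2 ?_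
  have hradial : IntegrableOn (fun t : ℝ => t ^ (Module.finrank ℝ E - 1 + p)) (Ioo 0 R) :=
    (intervalIntegral.integrableOn_Ioo_rpow_iff hR).2 (by linarith)
  refine hradial.congr_fun (fun t ht => ?_) measurableSet_Ioo
  rw [smul_eq_mul, ← Real.rpow_natCast, ← Real.rpow_add ht.1, Nat.cast_pred Module.finrank_pos]

lemma exists_setLIntegral_dist_rpow_le {p : ℝ} (hp : -(Module.finrank ℝ E : ℝ) < p) {s : Set E}
    (hs : Bornology.IsBounded s) :
    ∃ C : ℝ≥0, ∀ x ∈ s, ∫⁻ y in s, ENNReal.ofReal (dist x y ^ p) ∂μ ≤ C := by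
  set R : ℝ := diam s + 1
  have hfin := (integrableOn_ball_norm_rpow μ hp R).lintegral_lt_top.ne
  refine ⟨(∫⁻ z in ball 0 R, ENNReal.ofReal (‖z‖ ^ p) ∂μ).toNNReal, fun x hx => ?_⟩
  have hsub : s ⊆ ball x R := fun y hy => (dist_le_diam_of_mem hs hy hx).trans_lt (lt_add_one _)
  have hball : (· - x) ⁻¹' ball 0 R = ball x R := by
    ext y
    simp [dist_eq_norm]
  calc ∫⁻ y in s, ENNReal.ofReal (dist x y ^ p) ∂μ
      ≤ ∫⁻ y in (· - x) ⁻¹' ball 0 R, ENNReal.ofReal (‖y - x‖ ^ p) ∂μ := by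
        simp_rw [dist_comm x, dist_eq_norm]
        exact lintegral_mono_set (hsub.trans_eq hball.symm)
    _ = ∫⁻ z in ball 0 R, ENNReal.ofReal (‖z‖ ^ p) ∂μ :=
        (measurePreserving_sub_right μ x).setLIntegral_comp_preimage_emb
          (MeasurableEquiv.subRight x).measurableEmbedding (fun z => ENNReal.ofReal (‖z‖ ^ p)) _
    _ = _ := (ENNReal.coe_toNNReal hfin).symm

end RieszPotential

lemma setLIntegral_enorm_le_mul_of_abs_le {X : Type*} [MetricSpace X] [MeasurableSpace X]
    {μ : Measure X} [NullSingletonClass μ] {K : Set X} (hK : MeasurableSet K) {g : X → ℝ}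
    {A p : ℝ} {x : X}
    (hg : ∀ y ∈ K, x ≠ y → |g y| ≤ A * dist x y ^ p) :
    ∫⁻ y in K, ‖g y‖ₑ ∂μ ≤
      ENNReal.ofReal A * ∫⁻ y in K, ENNReal.ofReal (dist x y ^ p) ∂μ := by
  rw [← lintegral_const_mul' _ _ ENNReal.ofReal_ne_top]
  refine lintegral_mono_ae ?_
  filter_upwards [ae_restrict_mem hK, Measure.ae_ne _ x] with y hy hyx
  rw [Real.enorm_eq_ofReal_abs, ← ENNReal.ofReal_mul' (by positivity)]
  exact ENNReal.ofReal_le_ofReal (hg y hy hyx.symm)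

section Boundary

lemma nonempty_frontier_of_isBounded {E : Type*} [NormedAddCommGroup E] [NormedSpace ℝ E]
    [Nontrivial E] {s : Set E} (hs : Bornology.IsBounded s) (hne : s.Nonempty) :
    (frontier s).Nonempty :=
  nonempty_frontier_iff.2 ⟨hne, fun h => NormedSpace.unbounded_univ ℝ E (h ▸ hs)⟩

variable {n : ℕ} {Ω : Set (Euc n)}

lemma bdist_nonneg (x : Euc n) : 0 ≤ bdist Ω x :=
  infDist_nonneg

lemma continuous_bdist : Continuous (bdist Ω) :=
  continuous_infDist_pt _

lemma continuous_bdist_rpow {γ : ℝ} (hγ : 0 ≤ γ) : Continuous fun x => bdist Ω x ^ γ :=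
  continuous_bdist.rpow_const fun _ => Or.inr hγ

lemma bdist_pos [NeZero n] (hΩo : IsOpen Ω) (hΩb : Bornology.IsBounded Ω) {x : Euc n}
    (hx : x ∈ Ω) : 0 < bdist Ω x :=
  (isClosed_frontier.notMem_iff_infDist_pos (nonempty_frontier_of_isBounded hΩb ⟨x, hx⟩)).1
    fun h => (hΩo.frontier_eq ▸ h).2 hx

lemma bdist_rpow_pos [NeZero n] (hΩo : IsOpen Ω) (hΩb : Bornology.IsBounded Ω) {γ : ℝ}
    {x : Euc n} (hx : x ∈ Ω) : 0 < bdist Ω x ^ γ :=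
  Real.rpow_pos_of_pos (bdist_pos hΩo hΩb hx) γ

/-- Either `r` is at least `b / 2`, and then the quotient is small, or `a` is at least `b / 2`. -/
lemma min_mul_div_sq_le {a b r : ℝ} (ha : 0 ≤ a) (hb : 0 < b) (hbar : b ≤ a + r) :
    min (a * b / r ^ 2) 1 ≤ 4 * a / b := by
  rcases le_or_gt (b / 2) r with hr | hr
  · calc min (a * b / r ^ 2) 1 ≤ a * b / r ^ 2 := min_le_left _ _
      _ ≤ a * b / (b / 2) ^ 2 := by gcongr
      _ = 4 * a / b := by field_simp; norm_num
  · calc min (a * b / r ^ 2) 1 ≤ 1 := min_le_right _ _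
      _ ≤ 4 * a / b := by rw [le_div_iff₀ hb]; linarith

variable {s γ : ℝ}

lemma min_bdist_nonneg (x y : Euc n) :
    0 ≤ min (bdist Ω x * bdist Ω y / dist x y ^ (2 : ℝ)) 1 := by
  have := bdist_nonneg (Ω := Ω) x
  have := bdist_nonneg (Ω := Ω) y
  positivity

lemma Hker_nonneg (x y : Euc n) : 0 ≤ Hker Ω s γ x y :=
  mul_nonneg (by positivity) (Real.rpow_nonneg (min_bdist_nonneg x y) _)

lemma Hker_le_dist_rpow (hγ : 0 ≤ γ) (x y : Euc n) :
    Hker Ω s γ x y ≤ dist x y ^ (2 * s - (n : ℝ)) :=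
  mul_le_of_le_one_right (by positivity)
    (Real.rpow_le_one (min_bdist_nonneg x y) (min_le_right _ _) hγ)

lemma Hker_le_div_rpow_mul (hγ : 0 ≤ γ) (x : Euc n) {y : Euc n} (hy : 0 < bdist Ω y) :
    Hker Ω s γ x y ≤ (4 * bdist Ω x / bdist Ω y) ^ γ * dist x y ^ (2 * s - (n : ℝ)) := by
  have htri : bdist Ω y ≤ bdist Ω x + dist x y :=
    dist_comm y x ▸ infDist_le_infDist_add_dist
  have hmin := min_mul_div_sq_le (bdist_nonneg x) hy htri
  rw [← Real.rpow_two] at hmin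
  rw [Hker, mul_comm]
  gcongr
  exact min_bdist_nonneg x y

end Boundary

section KernelBounds

variable {n : ℕ} [NeZero n] {Ω : Set (Euc n)} {s γ Λ : ℝ} {G : Euc n → Euc n → ℝ}

lemma exists_setLIntegral_kernel_le (hΩo : IsOpen Ω) (hΩb : Bornology.IsBounded Ω) (hs : 0 < s)
    (hγ : 0 ≤ γ) (hG : ∀ x ∈ Ω, ∀ y ∈ Ω, x ≠ y → |G x y| ≤ Λ * Hker Ω s γ x y) :
    ∃ C : ℝ≥0, ∀ x ∈ Ω, ∫⁻ y in Ω, ‖G x y‖ₑ ≤ C := by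
  obtain ⟨C, hC⟩ := exists_setLIntegral_dist_rpow_le (volume : Measure (Euc n))
    (p := 2 * s - n) (by rw [finrank_euclideanSpace_fin]; linarith) hΩb
  refine ⟨|Λ|.toNNReal * C, fun x hx => ?_⟩
  have hle : ∀ y ∈ Ω, x ≠ y → |G x y| ≤ |Λ| * dist x y ^ (2 * s - (n : ℝ)) := fun y hy hxy =>
    calc |G x y| ≤ Λ * Hker Ω s γ x y := hG x hx y hy hxy
      _ ≤ |Λ| * Hker Ω s γ x y := by gcongr; exacts [Hker_nonneg x y, le_abs_self Λ]
      _ ≤ _ := by gcongr; exact Hker_le_dist_rpow hγ x y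
  calc ∫⁻ y in Ω, ‖G x y‖ₑ
      ≤ ENNReal.ofReal |Λ| * ∫⁻ y in Ω, ENNReal.ofReal (dist x y ^ (2 * s - (n : ℝ))) :=
        setLIntegral_enorm_le_mul_of_abs_le hΩo.measurableSet hle
    _ ≤ ENNReal.ofReal |Λ| * C := by gcongr; exact hC x hx
    _ = _ := by rw [ENNReal.coe_mul, ENNReal.ofReal]

lemma exists_setLIntegral_kernel_le_bdist_rpow (hΩo : IsOpen Ω) (hΩb : Bornology.IsBounded Ω)
    (hs : 0 < s) (hγ : 0 ≤ γ) (hG : ∀ x ∈ Ω, ∀ y ∈ Ω, x ≠ y → |G x y| ≤ Λ * Hker Ω s γ x y)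
    {K : Set (Euc n)} (hK : IsCompact K) (hKΩ : K ⊆ Ω) :
    ∃ C : ℝ≥0, ∀ x ∈ Ω, ∫⁻ y in K, ‖G x y‖ₑ ≤ C * ENNReal.ofReal (bdist Ω x ^ γ) := by
  obtain ⟨C, hC⟩ := exists_setLIntegral_dist_rpow_le (volume : Measure (Euc n))
    (p := 2 * s - n) (by rw [finrank_euclideanSpace_fin]; linarith) hΩb
  obtain ⟨d, hd, hdK⟩ : ∃ d, 0 < d ∧ ∀ y ∈ K, d ≤ bdist Ω y :=
    hK.exists_forall_le' continuous_bdist.continuousOn fun y hy => bdist_pos hΩo hΩb (hKΩ hy)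
  set A : ℝ := |Λ| * (4 / d) ^ γ
  refine ⟨A.toNNReal * C, fun x hx => ?_⟩
  have hδ := bdist_nonneg (Ω := Ω) x
  have hle : ∀ y ∈ K, x ≠ y →
      |G x y| ≤ A * bdist Ω x ^ γ * dist x y ^ (2 * s - (n : ℝ)) := fun y hy hxy =>
    calc |G x y| ≤ Λ * Hker Ω s γ x y := hG x hx y (hKΩ hy) hxy
      _ ≤ |Λ| * Hker Ω s γ x y := by gcongr; exacts [Hker_nonneg x y, le_abs_self Λ]
      _ ≤ |Λ| * ((4 * bdist Ω x / bdist Ω y) ^ γ * dist x y ^ (2 * s - (n : ℝ))) := by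
        gcongr; exact Hker_le_div_rpow_mul hγ x (hd.trans_le (hdK y hy))
      _ ≤ |Λ| * ((4 * bdist Ω x / d) ^ γ * dist x y ^ (2 * s - (n : ℝ))) := by
        have := bdist_nonneg (Ω := Ω) y
        gcongr; exact hdK y hy
      _ = _ := by rw [mul_div_right_comm, Real.mul_rpow (by positivity) hδ]; ring
  calc ∫⁻ y in K, ‖G x y‖ₑ
      ≤ ENNReal.ofReal (A * bdist Ω x ^ γ) *
          ∫⁻ y in K, ENNReal.ofReal (dist x y ^ (2 * s - (n : ℝ))) :=
        setLIntegral_enorm_le_mul_of_abs_le hK.measurableSet hle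
    _ ≤ ENNReal.ofReal (A * bdist Ω x ^ γ) * C := by
        gcongr; exact (lintegral_mono_set hKΩ).trans (hC x hx)
    _ = _ := by
        rw [ENNReal.ofReal_mul (by positivity), ENNReal.coe_mul, ENNReal.ofReal]; ring

end KernelBounds

section Potential

variable {X Y : Type*} [MeasurableSpace X] [MeasurableSpace Y] {G : X → Y → ℝ}
  {m : Measure X} {μ ν : Measure Y}

/-- The potential of the signed measure `μ - ν` with respect to the kernel `G`. The signed measure
is given by two positive ones because both may be infinite. -/
def potential (G : X → Y → ℝ) (μ ν : Measure Y) (x : X) : ℝ :=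
  (∫ y, G x y ∂μ) - ∫ y, G x y ∂ν

lemma stronglyMeasurable_potential [SFinite μ] [SFinite ν]
    (hG : Measurable (Function.uncurry G)) : StronglyMeasurable (potential G μ ν) :=
  hG.stronglyMeasurable.integral_prod_right.sub hG.stronglyMeasurable.integral_prod_right

lemma lintegral_enorm_potential_le [SFinite m] [SFinite μ] [SFinite ν]
    (hG : Measurable (Function.uncurry G)) :
    ∫⁻ x, ‖potential G μ ν x‖ₑ ∂m ≤ ∫⁻ y, ∫⁻ x, ‖G x y‖ₑ ∂m ∂(μ + ν) := by
  rw [← lintegral_lintegral_swap hG.enorm.aemeasurable]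
  refine lintegral_mono fun x => ?_
  rw [lintegral_add_measure]
  exact enorm_sub_le.trans
    (add_le_add (enorm_integral_le_lintegral_enorm _) (enorm_integral_le_lintegral_enorm _))

lemma integrable_potential [SFinite m] [SFinite μ] [SFinite ν]
    (hG : Measurable (Function.uncurry G)) (hfin : ∫⁻ y, ∫⁻ x, ‖G x y‖ₑ ∂m ∂(μ + ν) ≠ ⊤) :
    Integrable (potential G μ ν) m :=
  ⟨(stronglyMeasurable_potential hG).aestronglyMeasurable,
    (lintegral_enorm_potential_le hG).trans_lt hfin.lt_top⟩

lemma integral_abs_potential_le [SFinite m] [IsFiniteMeasure μ] [IsFiniteMeasure ν]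
    (hG : Measurable (Function.uncurry G)) {C : ℝ≥0}
    (hC : ∀ᵐ y ∂(μ + ν), ∫⁻ x, ‖G x y‖ₑ ∂m ≤ C) :
    ∫ x, |potential G μ ν x| ∂m ≤ C * (μ.real univ + ν.real univ) := by
  have hle : ∫⁻ x, ‖potential G μ ν x‖ₑ ∂m ≤ C * (μ + ν) univ :=
    calc ∫⁻ x, ‖potential G μ ν x‖ₑ ∂m
        ≤ ∫⁻ y, ∫⁻ x, ‖G x y‖ₑ ∂m ∂(μ + ν) := lintegral_enorm_potential_le hG
      _ ≤ ∫⁻ _, C ∂(μ + ν) := lintegral_mono_ae hC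
      _ = C * (μ + ν) univ := lintegral_const _
  calc ∫ x, |potential G μ ν x| ∂m = (∫⁻ x, ‖potential G μ ν x‖ₑ ∂m).toReal :=
        integral_norm_eq_lintegral_enorm (stronglyMeasurable_potential hG).aestronglyMeasurable
    _ ≤ (C * (μ + ν) univ).toReal := ENNReal.toReal_mono (by finiteness) hle
    _ = C * (μ.real univ + ν.real univ) := by
        rw [ENNReal.toReal_mul, ENNReal.coe_toReal, ← measureReal_def, measureReal_add_apply]

lemma integrable_kernel_mul [SFinite m] [SFinite μ] (hG : Measurable (Function.uncurry G))
    {ψ : X → ℝ} (hψ : Measurable ψ) {B : ℝ} (hB : ∀ x, |ψ x| ≤ B) {K : Set X}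
    (hψK : Function.support ψ ⊆ K) (hfin : ∫⁻ y, ∫⁻ x in K, ‖G x y‖ₑ ∂m ∂μ ≠ ⊤) :
    Integrable (fun p : X × Y => G p.1 p.2 * ψ p.1) (m.prod μ) := by
  have hGK : Integrable (Function.uncurry G) ((m.restrict K).prod μ) := by
    refine ⟨hG.aestronglyMeasurable, ?_⟩
    rw [HasFiniteIntegral, lintegral_prod_symm _ hG.enorm.aemeasurable]
    exact hfin.lt_top
  have hmul := hGK.mul_bdd (hψ.comp measurable_fst).aestronglyMeasurable
    (ae_of_all _ fun p => hB p.1)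
  rw [← Measure.restrict_univ (μ := μ), Measure.prod_restrict] at hmul
  refine (integrableOn_iff_integrable_of_support_subset fun p hp => ?_).1 hmul
  exact ⟨hψK (right_ne_zero_of_mul hp), mem_univ _⟩

lemma integral_potential_mul [SFinite m] [SFinite μ] [SFinite ν] {ψ : X → ℝ}
    (hμ : Integrable (fun p : X × Y => G p.1 p.2 * ψ p.1) (m.prod μ))
    (hν : Integrable (fun p : X × Y => G p.1 p.2 * ψ p.1) (m.prod ν)) :
    ∫ x, potential G μ ν x * ψ x ∂m =
      (∫ y, ∫ x, G x y * ψ x ∂m ∂μ) - ∫ y, ∫ x, G x y * ψ x ∂m ∂ν := by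
  rw [← integral_integral_swap (f := fun x y => G x y * ψ x) hμ,
    ← integral_integral_swap (f := fun x y => G x y * ψ x) hν,
    ← integral_sub hμ.integral_prod_left hν.integral_prod_left]
  simp only [potential, sub_mul, integral_mul_const]

lemma sFinite_of_lintegral_ne_top {w : X → ℝ≥0∞} (hw : AEMeasurable w m)
    (hw0 : ∀ᵐ x ∂m, w x ≠ 0) (hfin : ∫⁻ x, w x ∂m ≠ ⊤) : SFinite m := by
  have := isFiniteMeasure_withDensity hfin
  rw [← withDensity_inv_same₀ hw hw0 ((ae_lt_top' hw hfin).mono fun _ => LT.lt.ne)]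
  infer_instance

end Potential

section EssentialSupremum

lemma eLpNorm_div_top_le_iff {X : Type*} [MeasurableSpace X] {m : Measure X} {f w : X → ℝ}
    (hw : ∀ᵐ x ∂m, w x ≠ 0) {C : ℝ≥0∞} :
    eLpNorm (fun x => f x / w x) ⊤ m ≤ C ↔ ∀ᵐ x ∂m, ‖f x‖ₑ ≤ C * ‖w x‖ₑ := by
  have hiff : ∀ x, w x ≠ 0 → (‖f x / w x‖ₑ ≤ C ↔ ‖f x‖ₑ ≤ C * ‖w x‖ₑ) := fun x hx => by
    rw [← ENNReal.div_le_iff (enorm_ne_zero.2 hx) enorm_ne_top, div_eq_mul_inv, enorm_mul,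
      enorm_inv hx, div_eq_mul_inv]
  rw [eLpNorm_exponent_top]
  refine ⟨fun h => ?_, fun h => eLpNormEssSup_le_of_ae_enorm_bound ?_⟩
  · filter_upwards [ae_le_eLpNormEssSup (f := fun x => f x / w x), hw] with x hx hwx
      using (hiff x hwx).1 (hx.trans h)
  · filter_upwards [h, hw] with x hx hwx using (hiff x hwx).2 hx

/-- By Fatou's lemma the left-hand side is lower semicontinuous, so the inequality propagates from
a dense set. -/
lemma lintegral_le_of_ae_le_of_tendsto {X Y : Type*} [TopologicalSpace X] [FrechetUrysohnSpace X]
    [MeasurableSpace X] [OpensMeasurableSpace X] [MeasurableSpace Y] {m : Measure X}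
    [m.IsOpenPosMeasure] {ν : Measure Y} {Ω : Set X} (hΩ : IsOpen Ω) {F : X → Y → ℝ≥0∞}
    (hF : ∀ x, Measurable (F x))
    (hlim : ∀ x ∈ Ω, ∀ u : ℕ → X, (∀ j, u j ∈ Ω) → Tendsto u atTop (𝓝 x) →
      ∀ᵐ y ∂ν, Tendsto (fun j => F (u j) y) atTop (𝓝 (F x y)))
    {g : X → ℝ≥0∞} (hg : ContinuousOn g Ω) (hle : ∀ᵐ x ∂m.restrict Ω, ∫⁻ y, F x y ∂ν ≤ g x)
    {x : X} (hx : x ∈ Ω) : ∫⁻ y, F x y ∂ν ≤ g x := by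
  rw [ae_restrict_iff' hΩ.measurableSet] at hle
  obtain ⟨u, hu, hux⟩ := mem_closure_iff_seq_limit.1
    ((Measure.dense_of_ae hle).open_subset_closure_inter hΩ hx)
  have hgu : Tendsto (fun j => g (u j)) atTop (𝓝 (g x)) :=
    (hg x hx).tendsto.comp
      (tendsto_nhdsWithin_iff.2 ⟨hux, Eventually.of_forall fun j => (hu j).1⟩)
  calc ∫⁻ y, F x y ∂ν = ∫⁻ y, liminf (fun j => F (u j) y) atTop ∂ν :=
        lintegral_congr_ae ((hlim x hx u (fun j => (hu j).1) hux).mono fun _ h => h.liminf_eq.symm)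
    _ ≤ liminf (fun j => ∫⁻ y, F (u j) y ∂ν) atTop := lintegral_liminf_le fun j => hF (u j)
    _ ≤ liminf (fun j => g (u j)) atTop :=
        liminf_le_liminf (Eventually.of_forall fun j => (hu j).2 (hu j).1)
    _ = g x := hgu.liminf_eq

variable {n : ℕ} {Ω K : Set (Euc n)} {G : Euc n → Euc n → ℝ} {w : Euc n → ℝ} {C : ℝ≥0}

lemma Gop_indicator_one (hK : MeasurableSet K) (hKΩ : K ⊆ Ω) (x : Euc n) :
    Gop Ω G (K.indicator fun _ => 1) x = ∫ y in K, G x y := by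
  have hmul : (fun y => G x y * K.indicator (fun _ => 1) y) = K.indicator (G x) := by
    funext y
    by_cases hy : y ∈ K <;> simp [hy]
  rw [Gop, hmul, setIntegral_indicator hK, inter_eq_right.2 hKΩ]

lemma enorm_Gop_indicator_one (hK : MeasurableSet K) (hKΩ : K ⊆ Ω) {x : Euc n}
    (hGm : Measurable (G x)) (hG0 : ∀ y, 0 ≤ G x y) (hfin : ∫⁻ y in K, ‖G x y‖ₑ ≠ ⊤) :
    ‖Gop Ω G (K.indicator fun _ => 1) x‖ₑ = ∫⁻ y in K, ‖G x y‖ₑ := by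
  have hintegrable : IntegrableOn (G x) K := ⟨hGm.aestronglyMeasurable, hfin.lt_top⟩
  rw [Gop_indicator_one hK hKΩ, Real.enorm_of_nonneg (integral_nonneg hG0),
    ofReal_integral_eq_lintegral_ofReal hintegrable (ae_of_all _ hG0)]
  simp_rw [Real.enorm_of_nonneg (hG0 _)]

lemma eLpNorm_Gop_indicator_one_div_le_iff (hΩ : IsOpen Ω) (hK : MeasurableSet K) (hKΩ : K ⊆ Ω)
    (hGm : ∀ x, Measurable (G x)) (hG0 : ∀ x y, 0 ≤ G x y) (hw : ∀ x ∈ Ω, 0 < w x)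
    (hfin : ∀ x ∈ Ω, ∫⁻ y in K, ‖G x y‖ₑ ≠ ⊤) {M : ℝ≥0∞} :
    eLpNorm (fun x => Gop Ω G (K.indicator fun _ => 1) x / w x) ⊤ (volume.restrict Ω) ≤ M ↔
      ∀ᵐ x ∂volume.restrict Ω, ∫⁻ y in K, ‖G x y‖ₑ ≤ M * ENNReal.ofReal (w x) := by
  have hmem := ae_restrict_mem (μ := volume) hΩ.measurableSet
  rw [eLpNorm_div_top_le_iff (hmem.mono fun x hx => (hw x hx).ne')]
  refine eventually_congr (hmem.mono fun x hx => ?_)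
  rw [enorm_Gop_indicator_one hK hKΩ (hGm x) (hG0 x) (hfin x hx),
    Real.enorm_of_nonneg (hw x hx).le]

lemma eLpNorm_Gop_indicator_one_div_lt_top (hΩ : IsOpen Ω) (hK : MeasurableSet K) (hKΩ : K ⊆ Ω)
    (hGm : ∀ x, Measurable (G x)) (hG0 : ∀ x y, 0 ≤ G x y) (hw : ∀ x ∈ Ω, 0 < w x)
    (hC : ∀ x ∈ Ω, ∫⁻ y in K, ‖G x y‖ₑ ≤ C * ENNReal.ofReal (w x)) :
    eLpNorm (fun x => Gop Ω G (K.indicator fun _ => 1) x / w x) ⊤ (volume.restrict Ω) < ⊤ := by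
  have hfin : ∀ x ∈ Ω, ∫⁻ y in K, ‖G x y‖ₑ ≠ ⊤ := fun x hx =>
    ne_top_of_le_ne_top (by finiteness) (hC x hx)
  refine lt_of_le_of_lt ?_ (ENNReal.coe_lt_top (r := C))
  refine (eLpNorm_Gop_indicator_one_div_le_iff hΩ hK hKΩ hGm hG0 hw hfin).2 ?_
  exact (ae_restrict_mem hΩ.measurableSet).mono hC

/-- The bound holds at every point of `Ω`, so it can be integrated against measures that charge
Lebesgue-null sets. -/
lemma setLIntegral_kernel_le_eLpNorm_mul (hΩ : IsOpen Ω) (hK : MeasurableSet K) (hKΩ : K ⊆ Ω)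
    (hGm : ∀ x, Measurable (G x)) (hG0 : ∀ x y, 0 ≤ G x y)
    (hlim : ∀ x ∈ Ω, ∀ u : ℕ → Euc n, (∀ j, u j ∈ Ω) → Tendsto u atTop (𝓝 x) →
      ∀ᵐ y ∂volume.restrict Ω, Tendsto (fun j => G (u j) y) atTop (𝓝 (G x y)))
    (hw : ∀ x ∈ Ω, 0 < w x) (hwc : ContinuousOn w Ω)
    (hC : ∀ x ∈ Ω, ∫⁻ y in K, ‖G x y‖ₑ ≤ C * ENNReal.ofReal (w x)) {x : Euc n} (hx : x ∈ Ω) :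
    ∫⁻ y in K, ‖G x y‖ₑ ≤
      eLpNorm (fun x => Gop Ω G (K.indicator fun _ => 1) x / w x) ⊤ (volume.restrict Ω) *
        ENNReal.ofReal (w x) := by
  have hfin : ∀ x ∈ Ω, ∫⁻ y in K, ‖G x y‖ₑ ≠ ⊤ := fun x hx =>
    ne_top_of_le_ne_top (by finiteness) (hC x hx)
  have hM := (eLpNorm_Gop_indicator_one_div_lt_top hΩ hK hKΩ hGm hG0 hw hC).ne
  refine lintegral_le_of_ae_le_of_tendsto (m := volume) hΩ (fun x => (hGm x).enorm)
    (fun x hx u hu hux => ?_) ?_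
    ((eLpNorm_Gop_indicator_one_div_le_iff hΩ hK hKΩ hGm hG0 hw hfin).1 le_rfl) hx
  · filter_upwards [ae_restrict_of_ae_restrict_of_subset hKΩ (hlim x hx u hu hux)] with y hy
      using hy.enorm
  · exact fun x hx => ENNReal.Tendsto.const_mul (ENNReal.tendsto_ofReal (hwc x hx)) (Or.inr hM)

end EssentialSupremum

section WeakDual

lemma ae_eq_of_forall_setIntegral_mul_contDiff_eq {E : Type*} [NormedAddCommGroup E]
    [NormedSpace ℝ E] [FiniteDimensional ℝ E] [MeasurableSpace E] [BorelSpace E] {μ : Measure E}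
    {Ω : Set E} (hΩ : IsOpen Ω) {u v : E → ℝ}
    (hu : LocallyIntegrableOn u Ω μ) (hv : LocallyIntegrableOn v Ω μ)
    (huv : ∀ g : E → ℝ, ContDiff ℝ ∞ g → HasCompactSupport g → tsupport g ⊆ Ω →
      ∫ x in Ω, u x * g x ∂μ = ∫ x in Ω, v x * g x ∂μ) :
    u =ᵐ[μ.restrict Ω] v := by
  have hzero : ∀ᵐ x ∂μ, x ∈ Ω → (u - v) x = 0 := by
    refine hΩ.ae_eq_zero_of_integral_contDiff_smul_eq_zero (hu.sub hv) fun g hg hgc hgΩ => ?_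
    have hoff : ∀ x, x ∉ Ω → g x = 0 := fun x hx =>
      image_eq_zero_of_notMem_tsupport fun h => hx (hgΩ h)
    have hintegrable : ∀ f : E → ℝ, LocallyIntegrableOn f Ω μ →
        IntegrableOn (fun x => f x * g x) Ω μ := fun f hf => by
      have hfg := (hf.integrableOn_compact_subset hgΩ hgc).mul_continuousOn
        hg.continuous.continuousOn hgc
      refine ((integrableOn_iff_integrable_of_support_subset fun x hx => ?_).1 hfg).integrableOn
      exact subset_tsupport g (right_ne_zero_of_mul hx)
    calc ∫ x, g x • (u - v) x ∂μ = ∫ x in Ω, g x • (u - v) x ∂μ :=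
          (setIntegral_eq_integral_of_forall_compl_eq_zero fun x hx => by simp [hoff x hx]).symm
      _ = ∫ x in Ω, (u x * g x - v x * g x) ∂μ := by
          simp only [Pi.sub_apply, smul_eq_mul, mul_comm (g _), sub_mul]
      _ = 0 := by
          rw [integral_sub (hintegrable u hu) (hintegrable v hv), huv g hg hgc hgΩ, sub_self]
  rw [EventuallyEq, ae_restrict_iff' hΩ.measurableSet]
  exact hzero.mono fun x hx hxΩ => sub_eq_zero.1 (hx hxΩ)

variable {n : ℕ} {Ω : Set (Euc n)} {G : Euc n → Euc n → ℝ} {μp μn : Measure (Euc n)}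

/-- The weak-dual formulation, tested against `L∞_c(Ω)`, of the Green problem with datum
`μp - μn`. -/
def IsWeakDualSolution (Ω : Set (Euc n)) (G : Euc n → Euc n → ℝ) (μp μn : Measure (Euc n))
    (u : Euc n → ℝ) : Prop :=
  ∀ ψ : Euc n → ℝ, Measurable ψ → (∃ M, ∀ x, |ψ x| ≤ M) →
    IsCompact (tsupport ψ) → tsupport ψ ⊆ Ω →
    ∫ x in Ω, u x * ψ x = (∫ y in Ω, Gop Ω G ψ y ∂μp) - ∫ y in Ω, Gop Ω G ψ y ∂μn

lemma IsWeakDualSolution.ae_eq (hΩ : IsOpen Ω) {u v : Euc n → ℝ}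
    (hu : IsWeakDualSolution Ω G μp μn u) (hv : IsWeakDualSolution Ω G μp μn v)
    (hu' : LocallyIntegrableOn u Ω) (hv' : LocallyIntegrableOn v Ω) :
    u =ᵐ[volume.restrict Ω] v := by
  refine ae_eq_of_forall_setIntegral_mul_contDiff_eq hΩ hu' hv' fun g hg hgc hgΩ => ?_
  have hgb : ∃ M, ∀ x, |g x| ≤ M := hgc.exists_bound_of_continuous hg.continuous
  have hgm := hg.continuous.measurable
  exact (hu g hgm hgb hgc hgΩ).trans (hv g hgm hgb hgc hgΩ).symm

lemma locallyIntegrableOn_potential (hΩ : IsOpen Ω) [SFinite (μp.restrict Ω)]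
    [SFinite (μn.restrict Ω)] (hGm : Measurable (Function.uncurry G))
    (hfin : ∀ K, IsCompact K → K ⊆ Ω →
      ∫⁻ y in Ω, (∫⁻ x in K, ‖G x y‖ₑ) ∂(μp + μn) ≠ ⊤) :
    LocallyIntegrableOn (potential G (μp.restrict Ω) (μn.restrict Ω)) Ω := by
  simp only [Measure.restrict_add] at hfin
  exact (locallyIntegrableOn_iff hΩ.isLocallyClosed).2 fun K hKΩ hK =>
    integrable_potential hGm (hfin K hK hKΩ)

lemma isWeakDualSolution_potential [SFinite (μp.restrict Ω)] [SFinite (μn.restrict Ω)]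
    (hGm : Measurable (Function.uncurry G)) (hGsym : ∀ x y, G x y = G y x)
    (hfin : ∀ K, IsCompact K → K ⊆ Ω →
      ∫⁻ y in Ω, (∫⁻ x in K, ‖G x y‖ₑ) ∂(μp + μn) ≠ ⊤) :
    IsWeakDualSolution Ω G μp μn (potential G (μp.restrict Ω) (μn.restrict Ω)) := by
  rintro ψ hψ ⟨B, hB⟩ hψc hψΩ
  have hGop : ∀ y, Gop Ω G ψ y = ∫ x in Ω, G x y * ψ x := fun y => by simp only [Gop, hGsym y]
  have hsum := hfin _ hψc hψΩ
  rw [Measure.restrict_add, lintegral_add_measure, ENNReal.add_ne_top] at hsum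
  have hrestr : (volume.restrict Ω).restrict (tsupport ψ) = volume.restrict (tsupport ψ) :=
    Measure.restrict_restrict_of_subset hψΩ
  have hintegrable : ∀ μ : Measure (Euc n), [SFinite (μ.restrict Ω)] →
      ∫⁻ y in Ω, (∫⁻ x in tsupport ψ, ‖G x y‖ₑ) ∂μ ≠ ⊤ →
      Integrable (fun p : Euc n × Euc n => G p.1 p.2 * ψ p.1)
        ((volume.restrict Ω).prod (μ.restrict Ω)) := fun μ _ hμ =>
    integrable_kernel_mul hGm hψ hB (subset_tsupport ψ) (by rwa [hrestr])
  rw [integral_potential_mul (hintegrable μp hsum.1) (hintegrable μn hsum.2)]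
  simp only [hGop]

end WeakDual

section MeasureData

variable {n : ℕ} [NeZero n] {Ω : Set (Euc n)} {s γ Λ : ℝ} {G : Euc n → Euc n → ℝ}

lemma exists_integrableOn_potential_and_integral_abs_le (hΩo : IsOpen Ω)
    (hΩb : Bornology.IsBounded Ω) (hs : 0 < s) (hγ : 0 ≤ γ) (hGm : Measurable (Function.uncurry G))
    (hGsym : ∀ x y, G x y = G y x)
    (hG : ∀ x ∈ Ω, ∀ y ∈ Ω, x ≠ y → |G x y| ≤ Λ * Hker Ω s γ x y) :
    ∃ C : ℝ, 0 < C ∧ ∀ μ ν : Measure (Euc n), IsFiniteMeasure μ → IsFiniteMeasure ν →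
      IntegrableOn (potential G (μ.restrict Ω) (ν.restrict Ω)) Ω ∧
      ∫ x in Ω, |potential G (μ.restrict Ω) (ν.restrict Ω) x| ≤ C * (μ.real Ω + ν.real Ω) := by
  obtain ⟨C, hC⟩ := exists_setLIntegral_kernel_le hΩo hΩb hs hγ hG
  refine ⟨C + 1, by positivity, fun μ ν _ _ => ?_⟩
  have hcol : ∀ᵐ y ∂(μ.restrict Ω + ν.restrict Ω), ∫⁻ x in Ω, ‖G x y‖ₑ ≤ C := by
    rw [← Measure.restrict_add]
    filter_upwards [ae_restrict_mem hΩo.measurableSet] with y hy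
    simpa only [hGsym y] using hC y hy
  refine ⟨integrable_potential hGm (ne_top_of_le_ne_top ?_ (lintegral_mono_ae hcol)), ?_⟩
  · rw [lintegral_const]
    finiteness
  · refine (integral_abs_potential_le hGm hcol).trans ?_
    rw [measureReal_restrict_apply_univ, measureReal_restrict_apply_univ]
    gcongr
    exact le_add_of_nonneg_right zero_le_one

lemma sFinite_restrict_of_lintegral_bdist_rpow_ne_top (hΩo : IsOpen Ω)
    (hΩb : Bornology.IsBounded Ω) (hγ : 0 ≤ γ) {μ : Measure (Euc n)}
    (hμ : ∫⁻ x in Ω, ENNReal.ofReal (bdist Ω x ^ γ) ∂μ ≠ ⊤) : SFinite (μ.restrict Ω) := by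
  refine sFinite_of_lintegral_ne_top
    (continuous_bdist_rpow hγ).measurable.ennreal_ofReal.aemeasurable ?_ hμ
  filter_upwards [ae_restrict_mem hΩo.measurableSet] with x hx
  exact (ENNReal.ofReal_pos.2 (bdist_rpow_pos hΩo hΩb hx)).ne'

lemma eLpNorm_Gop_indicator_one_div_bdist_rpow_lt_top (hΩo : IsOpen Ω)
    (hΩb : Bornology.IsBounded Ω) (hs : 0 < s) (hγ : 0 ≤ γ)
    (hGm : Measurable (Function.uncurry G)) (hGpos : ∀ x y, 0 ≤ G x y)
    (hG : ∀ x ∈ Ω, ∀ y ∈ Ω, x ≠ y → |G x y| ≤ Λ * Hker Ω s γ x y) {K : Set (Euc n)}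
    (hK : IsCompact K) (hKΩ : K ⊆ Ω) :
    eLpNorm (fun x => Gop Ω G (K.indicator fun _ => 1) x / bdist Ω x ^ γ) ⊤
      (volume.restrict Ω) < ⊤ := by
  obtain ⟨C, hC⟩ := exists_setLIntegral_kernel_le_bdist_rpow hΩo hΩb hs hγ hG hK hKΩ
  exact eLpNorm_Gop_indicator_one_div_lt_top hΩo hK.measurableSet hKΩ
    (fun _ => hGm.of_uncurry_left) hGpos (fun _ => bdist_rpow_pos hΩo hΩb) hC

lemma lintegral_setLIntegral_kernel_le_mul_eLpNorm (hΩo : IsOpen Ω)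
    (hΩb : Bornology.IsBounded Ω) (hs : 0 < s) (hγ : 0 ≤ γ)
    (hGm : Measurable (Function.uncurry G)) (hGpos : ∀ x y, 0 ≤ G x y)
    (hG : ∀ x ∈ Ω, ∀ y ∈ Ω, x ≠ y → |G x y| ≤ Λ * Hker Ω s γ x y)
    (hGlim : ∀ x ∈ Ω, ∀ u : ℕ → Euc n, (∀ j, u j ∈ Ω) → Tendsto u atTop (𝓝 x) →
      ∀ᵐ y ∂volume.restrict Ω, Tendsto (fun j => G (u j) y) atTop (𝓝 (G x y)))
    {K : Set (Euc n)} (hK : IsCompact K) (hKΩ : K ⊆ Ω) (μ : Measure (Euc n)) :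
    ∫⁻ x in Ω, (∫⁻ y in K, ‖G x y‖ₑ) ∂μ ≤
      (∫⁻ x in Ω, ENNReal.ofReal (bdist Ω x ^ γ) ∂μ) *
        eLpNorm (fun x => Gop Ω G (K.indicator fun _ => 1) x / bdist Ω x ^ γ) ⊤
          (volume.restrict Ω) := by
  obtain ⟨C, hC⟩ := exists_setLIntegral_kernel_le_bdist_rpow hΩo hΩb hs hγ hG hK hKΩ
  have hnorm := eLpNorm_Gop_indicator_one_div_bdist_rpow_lt_top hΩo hΩb hs hγ hGm hGpos hG hK hKΩ
  rw [← lintegral_mul_const' _ _ hnorm.ne]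
  refine setLIntegral_mono' hΩo.measurableSet fun x hx => ?_
  rw [mul_comm]
  exact setLIntegral_kernel_le_eLpNorm_mul hΩo hK.measurableSet hKΩ
    (fun _ => hGm.of_uncurry_left) hGpos hGlim (fun _ => bdist_rpow_pos hΩo hΩb)
    (continuous_bdist_rpow hγ).continuousOn hC hx

end MeasureData

theorem statement7_general {n : ℕ} [NeZero n] {Ω : Set (Euc n)} {s γ Λ : ℝ}
    {G : Euc n → Euc n → ℝ} (hΩo : IsOpen Ω) (hΩb : Bornology.IsBounded Ω) (hs : 0 < s)
    (hγ : 0 ≤ γ) (hGm : Measurable (Function.uncurry G)) (hGpos : ∀ x y, 0 ≤ G x y)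
    (hGsym : ∀ x y, G x y = G y x)
    (hG : ∀ x ∈ Ω, ∀ y ∈ Ω, x ≠ y → G x y ≤ Λ * Hker Ω s γ x y)
    (hGlim : ∀ x ∈ Ω, ∀ u : ℕ → Euc n, (∀ j, u j ∈ Ω) → Tendsto u atTop (𝓝 x) →
      ∀ᵐ y ∂volume.restrict Ω, Tendsto (fun j => G (u j) y) atTop (𝓝 (G x y))) :
    (∃ C : ℝ, 0 < C ∧ ∀ μp μn : Measure (Euc n), IsFiniteMeasure μp → IsFiniteMeasure μn →
      IntegrableOn (potential G (μp.restrict Ω) (μn.restrict Ω)) Ω ∧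
      ∫ x in Ω, |potential G (μp.restrict Ω) (μn.restrict Ω) x| ≤
        C * (μp.real Ω + μn.real Ω)) ∧
    ∀ μp μn : Measure (Euc n), ∫⁻ x in Ω, ENNReal.ofReal (bdist Ω x ^ γ) ∂(μp + μn) < ⊤ →
      LocallyIntegrableOn (potential G (μp.restrict Ω) (μn.restrict Ω)) Ω ∧
      IsWeakDualSolution Ω G μp μn (potential G (μp.restrict Ω) (μn.restrict Ω)) ∧
      (∀ v, LocallyIntegrableOn v Ω → IsWeakDualSolution Ω G μp μn v →
        v =ᵐ[volume.restrict Ω] potential G (μp.restrict Ω) (μn.restrict Ω)) ∧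
      ∀ K, IsCompact K → K ⊆ Ω →
        eLpNorm (fun x => Gop Ω G (K.indicator fun _ => 1) x / bdist Ω x ^ γ) ⊤
          (volume.restrict Ω) < ⊤ ∧
        ENNReal.ofReal (∫ x in K, |potential G (μp.restrict Ω) (μn.restrict Ω) x|) ≤
          (∫⁻ x in Ω, ENNReal.ofReal (bdist Ω x ^ γ) ∂(μp + μn)) *
            eLpNorm (fun x => Gop Ω G (K.indicator fun _ => 1) x / bdist Ω x ^ γ) ⊤
              (volume.restrict Ω) := by
  have hGabs : ∀ x ∈ Ω, ∀ y ∈ Ω, x ≠ y → |G x y| ≤ Λ * Hker Ω s γ x y := fun x hx y hy hxy =>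
    (abs_of_nonneg (hGpos x y)).trans_le (hG x hx y hy hxy)
  refine ⟨exists_integrableOn_potential_and_integral_abs_le hΩo hΩb hs hγ hGm hGsym hGabs,
    fun μp μn hμ => ?_⟩
  obtain ⟨hμp, hμn⟩ : _ ≠ ⊤ ∧ _ ≠ ⊤ := by
    simpa only [Measure.restrict_add, lintegral_add_measure, ENNReal.add_ne_top] using hμ.ne
  have := sFinite_restrict_of_lintegral_bdist_rpow_ne_top hΩo hΩb hγ hμp
  have := sFinite_restrict_of_lintegral_bdist_rpow_ne_top hΩo hΩb hγ hμn
  have hnorm := fun K => eLpNorm_Gop_indicator_one_div_bdist_rpow_lt_top (K := K) hΩo hΩb hs hγ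
    hGm hGpos hGabs
  have hTonelli : ∀ K, IsCompact K → K ⊆ Ω → ∫⁻ y in Ω, (∫⁻ x in K, ‖G x y‖ₑ) ∂(μp + μn) ≤
      (∫⁻ x in Ω, ENNReal.ofReal (bdist Ω x ^ γ) ∂(μp + μn)) *
        eLpNorm (fun x => Gop Ω G (K.indicator fun _ => 1) x / bdist Ω x ^ γ) ⊤
          (volume.restrict Ω) := fun K hK hKΩ => by
    simpa only [hGsym] using lintegral_setLIntegral_kernel_le_mul_eLpNorm hΩo hΩb hs hγ
      hGm hGpos hGabs hGlim hK hKΩ (μp + μn)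
  have hfin := fun K hK hKΩ =>
    ((hTonelli K hK hKΩ).trans_lt (ENNReal.mul_lt_top hμ (hnorm K hK hKΩ))).ne
  have hloc := locallyIntegrableOn_potential hΩo hGm hfin
  have hweak := isWeakDualSolution_potential hGm hGsym hfin
  refine ⟨hloc, hweak, fun v hv hvweak => hvweak.ae_eq hΩo hweak hv hloc,
    fun K hK hKΩ => ⟨hnorm K hK hKΩ, ?_⟩⟩
  calc ENNReal.ofReal (∫ x in K, |potential G (μp.restrict Ω) (μn.restrict Ω) x|)
      = ∫⁻ x in K, ‖potential G (μp.restrict Ω) (μn.restrict Ω) x‖ₑ :=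
        ofReal_integral_norm_eq_lintegral_enorm (hloc.integrableOn_compact_subset hKΩ hK)
    _ ≤ ∫⁻ y in Ω, (∫⁻ x in K, ‖G x y‖ₑ) ∂(μp + μn) := by
        rw [Measure.restrict_add]; exact lintegral_enorm_potential_le hGm
    _ ≤ _ := hTonelli K hK hKΩ

/-- measure data.  A signed measure is encoded as the difference of
two mutually singular (positive) measures `μp - μn`, with total variation
`μp + μn`.  Part (i): `𝒢 : 𝓜(Ω) → L¹(Ω)`.  Part (ii): for
`μ ∈ 𝓜(Ω, δ^γ)`, `u = 𝒢(μ)` is the unique local-L¹ weak-dual solution and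
satisfies the compact estimate. -/
theorem statement7 {n : ℕ} (Ω : Set (Euc n)) (s γ Λ : ℝ) (G : Euc n → Euc n → ℝ)
    (hΩo : IsOpen Ω) (hΩb : Bornology.IsBounded Ω) (hΩne : Ω.Nonempty)
    (hs0 : 0 < s) (hs1 : s ≤ 1) (hγ0 : 0 < γ) (hγ1 : γ ≤ 1) (hsn : 2 * s ≤ (n : ℝ))
    (hGm : Measurable (Function.uncurry G)) (hGpos : ∀ x y, 0 ≤ G x y)
    (hGsym : ∀ x y, G x y = G y x) (hΛ : 1 ≤ Λ)
    (hK2 : ∀ x ∈ Ω, ∀ y ∈ Ω, x ≠ y →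
      Λ⁻¹ * Hker Ω s γ x y ≤ G x y ∧ G x y ≤ Λ * Hker Ω s γ x y)
    (hK4 : ∀ x ∈ closure Ω, ∀ u : ℕ → Euc n, (∀ j, u j ∈ Ω) → Tendsto u atTop (𝓝 x) →
      ∀ᵐ y ∂volume.restrict Ω, Tendsto (fun j => G (u j) y) atTop (𝓝 (G x y))) :
    (∃ C : ℝ, 0 < C ∧ ∀ μp μn : Measure (Euc n), IsFiniteMeasure μp → IsFiniteMeasure μn →
        μp ⟂ₘ μn →
        ∀ u : Euc n → ℝ, (∀ x, u x = (∫ y in Ω, G x y ∂μp) - ∫ y in Ω, G x y ∂μn) →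
          IntegrableOn u Ω ∧ ∫ x in Ω, |u x| ≤ C * ((μp Ω).toReal + (μn Ω).toReal)) ∧
    (∀ μp μn : Measure (Euc n), μp ⟂ₘ μn →
        (∫⁻ x in Ω, ENNReal.ofReal (bdist Ω x ^ γ) ∂(μp + μn)) < ⊤ →
        ∀ u : Euc n → ℝ, (∀ x, u x = (∫ y in Ω, G x y ∂μp) - ∫ y in Ω, G x y ∂μn) →
          LocallyIntegrableOn u Ω ∧
          (∀ ψ : Euc n → ℝ, Measurable ψ → (∃ M, ∀ x, |ψ x| ≤ M) →
            IsCompact (tsupport ψ) → tsupport ψ ⊆ Ω →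
            ∫ x in Ω, u x * ψ x =
              (∫ y in Ω, Gop Ω G ψ y ∂μp) - ∫ y in Ω, Gop Ω G ψ y ∂μn) ∧
          (∀ v : Euc n → ℝ, LocallyIntegrableOn v Ω →
            (∀ ψ : Euc n → ℝ, Measurable ψ → (∃ M, ∀ x, |ψ x| ≤ M) →
              IsCompact (tsupport ψ) → tsupport ψ ⊆ Ω →
              ∫ x in Ω, v x * ψ x =
                (∫ y in Ω, Gop Ω G ψ y ∂μp) - ∫ y in Ω, Gop Ω G ψ y ∂μn) →
            v =ᵐ[volume.restrict Ω] u) ∧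
          (∀ K : Set (Euc n), IsCompact K → K ⊆ Ω →
            eLpNorm (fun x => Gop Ω G (K.indicator fun _ => 1) x / bdist Ω x ^ γ) ⊤
                (volume.restrict Ω) < ⊤ ∧
            ENNReal.ofReal (∫ x in K, |u x|) ≤
              (∫⁻ x in Ω, ENNReal.ofReal (bdist Ω x ^ γ) ∂(μp + μn)) *
                eLpNorm (fun x => Gop Ω G (K.indicator fun _ => 1) x / bdist Ω x ^ γ) ⊤
                  (volume.restrict Ω))) := by
  have : NeZero n := ⟨by rintro rfl; rw [Nat.cast_zero] at hsn; linarith⟩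
  obtain ⟨⟨C, hC0, hC⟩, hweighted⟩ := statement7_general hΩo hΩb hs0 hγ0.le hGm hGpos hGsym
    (fun x hx y hy hxy => (hK2 x hx y hy hxy).2) fun x hx => hK4 x (subset_closure hx)
  exact ⟨⟨C, hC0, fun μp μn hp hn _ u hu => funext hu ▸ hC μp μn hp hn⟩,
    fun μp μn _ hμ u hu => funext hu ▸ hweighted μp μn hμ⟩
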